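/- arXiv:2303.10041 — 2 statements merged into one kernel-verified Lean document; each statement's English description precedes it below -/
import Mathlib

section
/- Fix α, β ≥ 0 with α + β > 0. For every f ∈ 𝔛_ov, the extensions converge: lim_{n→∞} E^⊥_{nα,nβ} f = E^weks_{α,β} f in the norm of 𝒞, where E^weks_{α,β} f := (f̃_ℓ, f̃_r) with f̃_ℓ(x) = f(x) for x < 0, f̃_ℓ(0) = f(0−), f̃_ℓ(x) = ((α−β)/(α+β))·f(−x) − (2β/(α+β))·f(x) for x > 0, and f̃_r(x) = f(x) for x > 0, f̃_r(0) = f(0+), f̃_r(x) = −(2α/(α+β))·f(x) + ((β−α)/(α+β))·f(−x) for x < 0. -/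
/-!
With `c = α + β` and `λ = n c`, both extensions involve the same expression
`fp e^{-λx} + ∫₀ˣ e^{-λ(x-y)} n (β f(y) - α f(-y)) dy`, and both limits follow once it is shown to
converge to `(β f(x) - α f(-x)) / c`, uniformly in `x > 0`.
Put `h(y) = (β f(|y|) - α f(-|y|)) / c - fp` for `y ≠ 0` and `h(0) = 0`. The condition
`f(0-) = -f(0+)` makes `h` continuous at `0`, and `h` has a common limit at `±∞`, so
it is bounded and uniformly continuous. The expression minus its limit equals
`λ ∫₀ˣ e^{-λ(x-y)} h(y) dy - h(x)`, so the claim is that `λ e^{-λ·}` is an approximate identity.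

Quantitatively, boundedness and uniform continuity give, for each `ε > 0`, a constant `K ≥ 0` with
`|h(y) - h(x)| ≤ ε + K |x - y|` (`exists_affine_modulus`). Integrating this majorant against
`λ e^{-λ(x-y)}`, with an explicit primitive, bounds the difference by `ε + K / λ`
(`abs_conv_sub_le`).
-/

open Filter Topology MeasureTheory Set intervalIntegral

noncomputable section

/-- `f` belongs to `C[-infty,infty]`: continuous with finite limits at both infinities. -/
def Cinf (f : ℝ → ℝ) : Prop :=
  Continuous f ∧ (∃ L, Tendsto f atTop (nhds L)) ∧ (∃ L, Tendsto f atBot (nhds L))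

/-- odd part of a function -/
def oddPart (f : ℝ → ℝ) : ℝ → ℝ := fun x => (f x - f (-x)) / 2

/-- even part of a function -/
def evenPart (f : ℝ → ℝ) : ℝ → ℝ := fun x => (f x + f (-x)) / 2

/-- the exponential function `e_a(x) = exp(-a x)` -/
def expa (a : ℝ) : ℝ → ℝ := fun x => Real.exp (-(a * x))

/-- the (signed) convolution `(f*g)(x) = ∫_0^x f(x-y) g(y) dy`, for all real `x` -/
def conv (f g : ℝ → ℝ) : ℝ → ℝ := fun x => ∫ y in (0:ℝ)..x, f (x - y) * g y

/-- the basic cosine family `C(t)f(x) = (f(x+t)+f(x-t))/2` -/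
def cosF (t : ℝ) (f : ℝ → ℝ) : ℝ → ℝ := fun x => (f (x + t) + f (x - t)) / 2

/-- membership in `𝔛`: functions on `ℝ \\ {0}` (the value at `0` is irrelevant), continuous on
both open half-lines, with finite one-sided limits at `0` and finite limits at `±∞`. -/
def memX (f : ℝ → ℝ) : Prop :=
  ContinuousOn f (Iio 0) ∧ ContinuousOn f (Ioi 0) ∧
  (∃ L, Tendsto f (nhdsWithin 0 (Iio 0)) (nhds L)) ∧
  (∃ L, Tendsto f (nhdsWithin 0 (Ioi 0)) (nhds L)) ∧
  (∃ L, Tendsto f atTop (nhds L)) ∧ (∃ L, Tendsto f atBot (nhds L))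

/-- supremum norm on `𝔛` (the point `0` does not count) -/
def Xnorm (f : ℝ → ℝ) : ℝ := ⨆ x : {y : ℝ // y ≠ 0}, |f x.1|

/-- supremum norm on `C[-∞,∞]` -/
def Cnorm (f : ℝ → ℝ) : ℝ := ⨆ x : ℝ, |f x|

/-- the restriction operator `R : 𝒞 → 𝔛` -/
def restr (ψ₁ ψ₂ : ℝ → ℝ) : ℝ → ℝ := fun x => if x < 0 then ψ₁ x else ψ₂ x

/-- the extension `f̃_ℓ` used by `E⊥_{α,β}`; `fm = f(0-)`, `fp = f(0+)` -/
def extPL (α β : ℝ) (f : ℝ → ℝ) (fm fp : ℝ) : ℝ → ℝ := fun x =>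
  if x < 0 then f x
  else if x = 0 then fm
  else -f (-x) - 2 * fp * Real.exp (-((α + β) * x)) -
    2 * ∫ y in (0:ℝ)..x, Real.exp (-((α + β) * (x - y))) * (β * f y - α * f (-y))

/-- the extension `f̃_r` used by `E⊥_{α,β}`; `fp = f(0+)` -/
def extPR (α β : ℝ) (f : ℝ → ℝ) (fp : ℝ) : ℝ → ℝ := fun x =>
  if 0 < x then f x
  else if x = 0 then fp
  else -f (-x) + 2 * fp * Real.exp (-((α + β) * (-x))) +
    2 * ∫ y in (0:ℝ)..(-x), Real.exp (-((α + β) * (-x - y))) * (β * f y - α * f (-y))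

/-- left coordinate of the limit extension operator `E^weks_{α,β}` -/
def extWksL (α β : ℝ) (f : ℝ → ℝ) (fm : ℝ) : ℝ → ℝ := fun x =>
  if x < 0 then f x
  else if x = 0 then fm
  else ((α - β) / (α + β)) * f (-x) - (2 * β / (α + β)) * f x

/-- right coordinate of the limit extension operator `E^weks_{α,β}` -/
def extWksR (α β : ℝ) (f : ℝ → ℝ) (fp : ℝ) : ℝ → ℝ := fun x =>
  if 0 < x then f x
  else if x = 0 then fp
  else -(2 * α / (α + β)) * f x + ((β - α) / (α + β)) * f (-x)

/-- A continuous function on `ℝ` with the same limit at `±∞` has, for every `ε > 0`, an affine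
modulus of continuity with value `ε` at distance `0`. -/
lemma exists_affine_modulus {h : ℝ → ℝ} (hc : Continuous h) {L : ℝ}
    (hL : Tendsto h (cocompact ℝ) (𝓝 L)) {ε : ℝ} (hε : 0 < ε) :
    ∃ K : ℝ, 0 ≤ K ∧ ∀ x y, |h y - h x| ≤ ε + K * |x - y| := by
  let z : ZeroAtInftyContinuousMap ℝ ℝ :=
    { toFun := fun x => h x - L
      continuous_toFun := by fun_prop
      zero_at_infty' := by simpa using hL.sub_const L }
  obtain ⟨M, hM⟩ := ZeroAtInftyContinuousMap.bounded z
  have hu := ZeroAtInftyContinuousMap.uniformContinuous z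
  rw [Metric.uniformContinuous_iff] at hu
  obtain ⟨δ, hδ, hd⟩ := hu ε hε
  have hM0 : 0 ≤ M := le_trans dist_nonneg (hM 0 0)
  have hz : ∀ x y, dist (z y) (z x) = |h y - h x| := by
    intro x y
    rw [Real.dist_eq]
    change |(h y - L) - (h x - L)| = _
    congr 1
    ring
  refine ⟨M / δ, by positivity, fun x y => ?_⟩
  by_cases hxy : |x - y| < δ
  · have h1 := hd (a := y) (b := x) (by rw [dist_comm, Real.dist_eq]; exact hxy)
    rw [hz] at h1
    have : 0 ≤ M / δ * |x - y| := by positivity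
    linarith
  · have h1 := hM y x
    rw [hz] at h1
    have : M ≤ M / δ * |x - y| := by
      rw [div_mul_eq_mul_div, le_div_iff₀ hδ]
      exact mul_le_mul_of_nonneg_left (not_lt.mp hxy) hM0
    linarith

/-- The case `ε = 1`, `K = 0` gives the mass of the kernel on `[0, x]`. -/
lemma integral_kernel (l ε K x : ℝ) (hl : 0 < l) :
    ∫ y in (0:ℝ)..x, l * Real.exp (-(l * (x - y))) * (ε + K * (x - y)) =
      (ε + K / l) - Real.exp (-(l * x)) * (ε + K * x + K / l) := by
  rw [integral_eq_sub_of_hasDerivAt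
    (f := fun y => Real.exp (-(l * (x - y))) * (ε + K * (x - y) + K / l))]
  · simp
  · intro y _
    have h0 : HasDerivAt (fun y : ℝ => x - y) (-1) y := by
      simpa using (hasDerivAt_id y).const_sub x
    have h1 := ((h0.const_mul l).neg).exp
    have h2 := ((h0.const_mul K).const_add ε).add_const (K / l)
    refine (h1.mul h2).congr_deriv ?_
    simp only [Pi.neg_apply]
    field_simp
    ring
  · apply Continuous.intervalIntegrable
    fun_prop

/-- Since `h 0 = 0`, the mass `e^{-lx}` missing from the kernel on `[0, x]` costs only
`e^{-lx} |h x - h 0|`, which the affine modulus controls as well. -/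
lemma abs_conv_sub_le {h : ℝ → ℝ} (hc : Continuous h) (h0 : h 0 = 0) {ε K : ℝ} (hK : 0 ≤ K)
    (hm : ∀ x y, |h y - h x| ≤ ε + K * |x - y|) {l x : ℝ} (hl : 0 < l) (hx : 0 < x) :
    |(∫ y in (0:ℝ)..x, l * Real.exp (-(l * (x - y))) * h y) - h x| ≤ ε + K / l := by
  have hmass := integral_kernel l 1 0 x hl
  simp only [zero_mul, add_zero, mul_one, zero_div] at hmass
  have hsplit : (∫ y in (0:ℝ)..x, l * Real.exp (-(l * (x - y))) * h y) - h x =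
      (∫ y in (0:ℝ)..x, l * Real.exp (-(l * (x - y))) * (h y - h x))
        + Real.exp (-(l * x)) * (h 0 - h x) := by
    have : ∫ y in (0:ℝ)..x, l * Real.exp (-(l * (x - y))) * (h y - h x) =
        (∫ y in (0:ℝ)..x, l * Real.exp (-(l * (x - y))) * h y)
          - (∫ y in (0:ℝ)..x, l * Real.exp (-(l * (x - y)))) * h x := by
      rw [← intervalIntegral.integral_mul_const, ← intervalIntegral.integral_sub]
      · simp only [mul_sub]
      · apply Continuous.intervalIntegrable
        fun_prop
      · apply Continuous.intervalIntegrable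
        fun_prop
    rw [this, hmass, h0]
    ring
  have h1 : |∫ y in (0:ℝ)..x, l * Real.exp (-(l * (x - y))) * (h y - h x)| ≤
      (ε + K / l) - Real.exp (-(l * x)) * (ε + K * x + K / l) := by
    rw [← integral_kernel l ε K x hl, ← Real.norm_eq_abs]
    apply intervalIntegral.norm_integral_le_of_norm_le hx.le
    · refine ae_of_all _ fun y hy => ?_
      have hy' := hm x y
      rw [abs_of_nonneg (a := x - y) (by linarith [hy.2])] at hy'
      rw [norm_mul, Real.norm_eq_abs, Real.norm_eq_abs, abs_of_nonneg (by positivity)]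
      gcongr
    · apply Continuous.intervalIntegrable
      fun_prop
  have h2 : |Real.exp (-(l * x)) * (h 0 - h x)| ≤ Real.exp (-(l * x)) * (ε + K * x) := by
    have := hm x 0
    rw [sub_zero, abs_of_pos hx] at this
    rw [abs_mul, abs_of_pos (Real.exp_pos _)]
    gcongr
  have h3 : 0 ≤ Real.exp (-(l * x)) * (K / l) := by positivity
  rw [hsplit]
  refine (abs_add_le _ _).trans ?_
  linarith

/-- The even function `y ↦ (β f(|y|) - α f(-|y|)) / (α + β) - fp`, with value `0` at
`0`. Reflecting it makes its limits at `±∞` agree. -/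
def reflProfile (α β : ℝ) (f : ℝ → ℝ) (fp : ℝ) : ℝ → ℝ := fun y =>
  if y = 0 then 0 else (β * f |y| - α * f (-|y|)) / (α + β) - fp

lemma continuous_reflProfile {α β : ℝ} (hαβ : 0 < α + β) {f : ℝ → ℝ} {fm fp : ℝ} (hf : memX f)
    (hfm : Tendsto f (𝓝[<] 0) (𝓝 fm)) (hfp : Tendsto f (𝓝[>] 0) (𝓝 fp)) (hov : fm = -fp) :
    Continuous (reflProfile α β f fp) := by
  rw [continuous_iff_continuousAt]
  intro y
  by_cases hy : y = 0
  · subst hy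
    rw [continuousAt_iff_punctured_nhds]
    have habs : Tendsto (fun y : ℝ => |y|) (𝓝[≠] 0) (𝓝[>] 0) := by
      refine tendsto_nhdsWithin_iff.mpr ⟨?_, ?_⟩
      · have : Tendsto (fun y : ℝ => |y|) (𝓝 0) (𝓝 |0|) := continuous_abs.tendsto 0
        rw [abs_zero] at this
        exact this.mono_left nhdsWithin_le_nhds
      · filter_upwards [self_mem_nhdsWithin] with y hy
        exact abs_pos.mpr hy
    have hneg : Tendsto (fun y : ℝ => -|y|) (𝓝[≠] 0) (𝓝[<] 0) := by
      have h2 := tendsto_nhdsWithin_iff.mp habs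
      refine tendsto_nhdsWithin_iff.mpr ⟨by simpa using h2.1.neg, ?_⟩
      filter_upwards [h2.2] with y hy
      simpa using hy
    have hlim := ((((hfp.comp habs).const_mul β).sub ((hfm.comp hneg).const_mul α)).div_const
      (α + β)).sub_const fp
    have hval : (β * fp - α * fm) / (α + β) - fp = reflProfile α β f fp 0 := by
      simp only [reflProfile, if_true]
      rw [hov]
      field_simp
      ring
    rw [hval] at hlim
    refine hlim.congr' ?_
    filter_upwards [self_mem_nhdsWithin] with y hy
    have hy' : y ≠ 0 := hy
    simp [reflProfile, hy']
  · have hy' : 0 < |y| := abs_pos.mpr hy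
    have h1 : ContinuousAt (fun y => f |y|) y :=
      ContinuousAt.comp (f := fun y : ℝ => |y|) (hf.2.1.continuousAt (Ioi_mem_nhds hy'))
        continuous_abs.continuousAt
    have h2 : ContinuousAt (fun y => f (-|y|)) y :=
      ContinuousAt.comp (f := fun y : ℝ => -|y|)
        (hf.1.continuousAt (Iio_mem_nhds (by linarith))) continuous_abs.neg.continuousAt
    have h3 : ContinuousAt (fun y => (β * f |y| - α * f (-|y|)) / (α + β) - fp) y :=
      (((continuousAt_const.mul h1).sub (continuousAt_const.mul h2)).div_const (α + β)).sub continuousAt_const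
    refine h3.congr ?_
    filter_upwards [isOpen_ne.mem_nhds hy] with w hw
    have hw' : w ≠ 0 := hw
    simp [reflProfile, hw']

lemma tendsto_reflProfile (α β : ℝ) {f : ℝ → ℝ} (fp : ℝ) (hf : memX f) :
    ∃ L, Tendsto (reflProfile α β f fp) (cocompact ℝ) (𝓝 L) := by
  obtain ⟨-, -, -, -, ⟨P, hP⟩, ⟨N, hN⟩⟩ := hf
  have habs : Tendsto (fun y : ℝ => |y|) (cocompact ℝ) atTop := tendsto_norm_cocompact_atTop
  have hneg : Tendsto (fun y : ℝ => -|y|) (cocompact ℝ) atBot := tendsto_neg_atTop_atBot.comp habs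
  refine ⟨(β * P - α * N) / (α + β) - fp, ?_⟩
  refine (((((hP.comp habs).const_mul β).sub ((hN.comp hneg).const_mul α)).div_const
      (α + β)).sub_const fp).congr' ?_
  filter_upwards [habs.eventually_gt_atTop 0] with y hy
  simp [reflProfile, abs_pos.mp hy]

/-- The expression shared by both extensions converges uniformly on `x > 0`. -/
lemma eventually_common {α β : ℝ} (hαβ : 0 < α + β) {f : ℝ → ℝ} {fm fp : ℝ} (hf : memX f)
    (hfm : Tendsto f (𝓝[<] 0) (𝓝 fm)) (hfp : Tendsto f (𝓝[>] 0) (𝓝 fp)) (hov : fm = -fp)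
    {ε : ℝ} (hε : 0 < ε) :
    ∀ᶠ n : ℕ in atTop, ∀ x : ℝ, 0 < x →
      |fp * Real.exp (-((n * α + n * β) * x)) +
        (∫ y in (0:ℝ)..x, Real.exp (-((n * α + n * β) * (x - y))) *
          (n * β * f y - n * α * f (-y))) - (β * f x - α * f (-x)) / (α + β)| < ε := by
  have hc := continuous_reflProfile hαβ hf hfm hfp hov
  obtain ⟨L, hL⟩ := tendsto_reflProfile α β fp hf
  obtain ⟨K, hK, hm⟩ := exists_affine_modulus hc hL (half_pos hε)
  have hlim : Tendsto (fun n : ℕ => K / ((n : ℝ) * (α + β))) atTop (𝓝 0) :=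
    (tendsto_natCast_atTop_atTop.atTop_mul_const hαβ).const_div_atTop K
  filter_upwards [hlim.eventually_lt_const (half_pos hε), eventually_gt_atTop 0] with n hn hn0 x hx
  have hn0' : (0:ℝ) < n := by exact_mod_cast hn0
  have hl : 0 < (n : ℝ) * (α + β) := by positivity
  have hle : (n : ℝ) * α + n * β = n * (α + β) := by ring
  rw [hle]
  set l := (n : ℝ) * (α + β) with hldef
  have hval : ∀ y, 0 < y → reflProfile α β f fp y = (β * f y - α * f (-y)) / (α + β) - fp := by
    intro y hy
    simp [reflProfile, hy.ne', abs_of_pos hy]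
  have hmass := integral_kernel l 1 0 x hl
  simp only [zero_mul, add_zero, mul_one, zero_div] at hmass
  have hint : ∫ y in (0:ℝ)..x, Real.exp (-(l * (x - y))) * (n * β * f y - n * α * f (-y)) =
      (∫ y in (0:ℝ)..x, l * Real.exp (-(l * (x - y))) * reflProfile α β f fp y)
        + (1 - Real.exp (-(l * x))) * fp := by
    rw [← hmass, ← intervalIntegral.integral_mul_const, ← intervalIntegral.integral_add]
    · refine intervalIntegral.integral_congr_ae (ae_of_all _ fun y hy => ?_)
      rw [uIoc_of_le hx.le] at hy
      rw [hval y hy.1, hldef]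
      field_simp
      ring
    · apply Continuous.intervalIntegrable
      fun_prop
    · apply Continuous.intervalIntegrable
      fun_prop
  have hmain := abs_conv_sub_le hc (by simp [reflProfile]) hK hm hl hx
  rw [hval x hx] at hmain
  rw [hint]
  refine lt_of_le_of_lt (le_of_eq_of_le ?_ hmain) (by linarith)
  congr 1
  ring

/-- for `f ∈ 𝔛_ov` (i.e. `f(0-) = -f(0+)`), the extensions `E⊥_{nα,nβ} f`
converge uniformly (i.e. in the norm of `𝒞`) to `E^weks_{α,β} f`. -/
theorem statement17 (α β : ℝ) (hα : 0 ≤ α) (hβ : 0 ≤ β) (hαβ : 0 < α + β)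
    (f : ℝ → ℝ) (fm fp : ℝ) (hf : memX f)
    (hfm : Tendsto f (nhdsWithin 0 (Iio 0)) (nhds fm))
    (hfp : Tendsto f (nhdsWithin 0 (Ioi 0)) (nhds fp))
    (hov : fm = -fp) :
    TendstoUniformly (fun (n : ℕ) (x : ℝ) => extPL ((n : ℝ) * α) ((n : ℝ) * β) f fm fp x)
      (extWksL α β f fm) atTop ∧
    TendstoUniformly (fun (n : ℕ) (x : ℝ) => extPR ((n : ℝ) * α) ((n : ℝ) * β) f fp x)
      (extWksR α β f fp) atTop := by
  constructor
  · rw [Metric.tendstoUniformly_iff]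
    intro ε hε
    filter_upwards [eventually_common hαβ hf hfm hfp hov (half_pos hε)] with n hn x
    rcases lt_trichotomy x 0 with hx | hx | hx
    · simp [extPL, extWksL, hx, hε]
    · simp [extPL, extWksL, hx, hε]
    · have h := hn x hx
      simp only [extPL, extWksL, not_lt.mpr hx.le, hx.ne', if_false, Real.dist_eq]
      refine lt_of_eq_of_lt (b := 2 * _) ?_ (by linarith)
      rw [← abs_two, ← abs_mul, abs_two]
      congr 1
      field_simp
      ring
  · rw [Metric.tendstoUniformly_iff]
    intro ε hε
    filter_upwards [eventually_common hαβ hf hfm hfp hov (half_pos hε)] with n hn x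
    rcases lt_trichotomy x 0 with hx | hx | hx
    · have h := hn (-x) (neg_pos.mpr hx)
      simp only [extPR, extWksR, not_lt.mpr hx.le, hx.ne, if_false, Real.dist_eq]
      rw [neg_neg] at h
      rw [abs_sub_comm]
      refine lt_of_eq_of_lt (b := 2 * _) ?_ (by linarith)
      rw [← abs_two, ← abs_mul, abs_two]
      congr 1
      field_simp
      ring
    · simp [extPR, extWksR, hx, hε]
    · simp [extPR, extWksR, hx, hε]
end
end

section
/- Fix α, β ≥ 0 with α + β > 0 and γ := √(2(α²+β²)). Define Q^skew_{α,β} := I − P^skew_{α,β} and 𝒟^weks_{α,β} := {(g₁,g₂) ∈ 𝒞 : g₁^e = −g₂^e and α g₁^o = −β g₂^o}. Then: (i) Q^skew_{α,β} is a projection of 𝒞 onto 𝒟^weks_{α,β} (it maps 𝒞 into 𝒟^weks_{α,β} and fixes each of its elements); (ii) 𝒞 is the direct sum 𝒞 = 𝒞^skew_{α,β} ⊕ 𝒟^weks_{α,β}, i.e., 𝒞^skew_{α,β} ∩ 𝒟^weks_{α,β} = {(0,0)} and every element of 𝒞 is a sum of an element of 𝒞^skew_{α,β} and an element of 𝒟^weks_{α,β};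 (iii) both 𝒞^skew_{α,β} and 𝒟^weks_{α,β} are invariant under the basic Cartesian product cosine family: for every t ∈ ℝ, C_D(t) maps each of these subspaces into itself. -/
/-!
Everything is pointwise linear algebra on the even and odd parts. Write `s = α² + β² > 0`, so that
`γ² = 2 s`. On even parts `P^skew` replaces the pair `(f₁ᵉ, f₂ᵉ)` by its orthogonal projection
`((f₁ᵉ + f₂ᵉ)/2, (f₁ᵉ + f₂ᵉ)/2)` onto the diagonal, and on odd parts it replaces `(f₁ᵒ, f₂ᵒ)` by its
orthogonal projection `(k₁ / s) • (α, β)` onto the line spanned by `(α, β)`. The spaces `𝒞^skew` and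
`𝒟^weks` consist of the pairs whose even and odd parts lie in these two lines, respectively in their
orthogonal complements, which gives the projection property (`memDweks_sub_Pskew`,
`memCskew_Pskew`) and the direct sum. Invariance holds because the cosine family commutes with
taking even and odd parts (`evenPart_cosF`, `oddPart_cosF`).
-/

open Filter Topology MeasureTheory Set intervalIntegral

noncomputable section

/-- `γ = sqrt(2(α²+β²))` -/
def gam (α β : ℝ) : ℝ := Real.sqrt (2 * (α ^ 2 + β ^ 2))

/-- `k₁ = α f₁ᵒ + β f₂ᵒ` -/
def kone (α β : ℝ) (f₁ f₂ : ℝ → ℝ) : ℝ → ℝ := fun x => α * oddPart f₁ x + β * oddPart f₂ x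

/-- `k₂ = f₁ᵉ - f₂ᵉ` -/
def ktwo (f₁ f₂ : ℝ → ℝ) : ℝ → ℝ := fun x => evenPart f₁ x - evenPart f₂ x

/-- the constant `c = ∫_0^∞ e^{-γx}(k₁(x) + (γ/2) k₂(x)) dx` -/
def cconst (α β : ℝ) (f₁ f₂ : ℝ → ℝ) : ℝ :=
  ∫ x in Ioi (0:ℝ), Real.exp (-(gam α β * x)) * (kone α β f₁ f₂ x + (gam α β / 2) * ktwo f₁ f₂ x)

/-- first coordinate `g₁` of `P_{α,β}(f₁,f₂)` -/
def Pone (α β : ℝ) (f₁ f₂ : ℝ → ℝ) : ℝ → ℝ := fun x =>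
  evenPart f₁ x +
    cconst α β f₁ f₂ * ((2 * α / gam α β) * Real.sinh (gam α β * x) - Real.cosh (gam α β * x)) -
    conv (fun y => (2 * α / gam α β) * kone α β f₁ f₂ y - (gam α β / 2) * ktwo f₁ f₂ y)
      (fun y => Real.sinh (gam α β * y)) x +
    conv (fun y => kone α β f₁ f₂ y - α * ktwo f₁ f₂ y) (fun y => Real.cosh (gam α β * y)) x

/-- second coordinate `g₂` of `P_{α,β}(f₁,f₂)` -/
def Ptwo (α β : ℝ) (f₁ f₂ : ℝ → ℝ) : ℝ → ℝ := fun x =>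
  evenPart f₂ x +
    cconst α β f₁ f₂ * ((2 * β / gam α β) * Real.sinh (gam α β * x) + Real.cosh (gam α β * x)) -
    conv (fun y => (2 * β / gam α β) * kone α β f₁ f₂ y + (gam α β / 2) * ktwo f₁ f₂ y)
      (fun y => Real.sinh (gam α β * y)) x -
    conv (fun y => kone α β f₁ f₂ y + β * ktwo f₁ f₂ y) (fun y => Real.cosh (gam α β * y)) x

/-- first coordinate of `P^skew_{α,β}` -/
def PskewOne (α β : ℝ) (f₁ f₂ : ℝ → ℝ) : ℝ → ℝ := fun x =>
  evenPart f₁ x + (2 * α / (gam α β) ^ 2) * kone α β f₁ f₂ x - (1 / 2) * ktwo f₁ f₂ x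

/-- second coordinate of `P^skew_{α,β}` -/
def PskewTwo (α β : ℝ) (f₁ f₂ : ℝ → ℝ) : ℝ → ℝ := fun x =>
  evenPart f₂ x + (2 * β / (gam α β) ^ 2) * kone α β f₁ f₂ x + (1 / 2) * ktwo f₁ f₂ x

/-- membership in `𝒞^skew_{α,β}` -/
def memCskew (α β : ℝ) (g₁ g₂ : ℝ → ℝ) : Prop :=
  Cinf g₁ ∧ Cinf g₂ ∧ (∀ x, evenPart g₁ x = evenPart g₂ x) ∧
  (∀ x, β * oddPart g₁ x = α * oddPart g₂ x)

/-- membership in `𝒟^weks_{α,β}` -/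
def memDweks (α β : ℝ) (g₁ g₂ : ℝ → ℝ) : Prop :=
  Cinf g₁ ∧ Cinf g₂ ∧ (∀ x, evenPart g₁ x = -evenPart g₂ x) ∧
  (∀ x, α * oddPart g₁ x = -(β * oddPart g₂ x))

lemma Cinf.add {f g : ℝ → ℝ} (hf : Cinf f) (hg : Cinf g) : Cinf (fun x => f x + g x) := by
  obtain ⟨hf, ⟨a, ha⟩, b, hb⟩ := hf
  obtain ⟨hg, ⟨c, hc⟩, d, hd⟩ := hg
  exact ⟨hf.add hg, ⟨_, ha.add hc⟩, ⟨_, hb.add hd⟩⟩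

lemma Cinf.const_mul {f : ℝ → ℝ} (r : ℝ) (hf : Cinf f) : Cinf (fun x => r * f x) := by
  obtain ⟨hf, ⟨a, ha⟩, b, hb⟩ := hf
  exact ⟨continuous_const.mul hf, ⟨_, ha.const_mul r⟩, ⟨_, hb.const_mul r⟩⟩

lemma Cinf.sub {f g : ℝ → ℝ} (hf : Cinf f) (hg : Cinf g) : Cinf (fun x => f x - g x) := by
  simpa [sub_eq_add_neg] using hf.add (hg.const_mul (-1))

lemma Cinf.comp_neg {f : ℝ → ℝ} (hf : Cinf f) : Cinf (fun x => f (-x)) := by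
  obtain ⟨hf, ⟨a, ha⟩, b, hb⟩ := hf
  exact ⟨hf.comp continuous_neg, ⟨_, hb.comp tendsto_neg_atTop_atBot⟩,
    ⟨_, ha.comp tendsto_neg_atBot_atTop⟩⟩

lemma Cinf.comp_add {f : ℝ → ℝ} (hf : Cinf f) (t : ℝ) : Cinf (fun x => f (x + t)) := by
  obtain ⟨hf, ⟨a, ha⟩, b, hb⟩ := hf
  exact ⟨hf.comp (continuous_id.add continuous_const),
    ⟨_, ha.comp (tendsto_atTop_add_const_right _ t tendsto_id)⟩,
    ⟨_, hb.comp (tendsto_atBot_add_const_right _ t tendsto_id)⟩⟩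

lemma Cinf.evenPart {f : ℝ → ℝ} (hf : Cinf f) : Cinf (evenPart f) := by
  convert (hf.add hf.comp_neg).const_mul (1 / 2) using 1
  funext x
  simp only [_root_.evenPart]
  ring

lemma Cinf.oddPart {f : ℝ → ℝ} (hf : Cinf f) : Cinf (oddPart f) := by
  convert (hf.sub hf.comp_neg).const_mul (1 / 2) using 1
  funext x
  simp only [_root_.oddPart]
  ring

lemma Cinf.cosF {f : ℝ → ℝ} (hf : Cinf f) (t : ℝ) : Cinf (cosF t f) := by
  convert ((hf.comp_add t).add (hf.comp_add (-t))).const_mul (1 / 2) using 1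
  funext x
  simp only [_root_.cosF, sub_eq_add_neg]
  ring

lemma evenPart_cosF (t : ℝ) (f : ℝ → ℝ) (x : ℝ) :
    evenPart (cosF t f) x = cosF t (evenPart f) x := by
  simp only [evenPart, cosF, neg_add, sub_eq_add_neg, neg_neg]
  ring

lemma oddPart_cosF (t : ℝ) (f : ℝ → ℝ) (x : ℝ) :
    oddPart (cosF t f) x = cosF t (oddPart f) x := by
  simp only [oddPart, cosF, neg_add, sub_eq_add_neg, neg_neg]
  ring

lemma evenPart_add_oddPart (f : ℝ → ℝ) (x : ℝ) : evenPart f x + oddPart f x = f x := by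
  simp only [evenPart, oddPart]
  ring

lemma gam_sq (α β : ℝ) : gam α β ^ 2 = 2 * (α ^ 2 + β ^ 2) :=
  Real.sq_sqrt (by positivity)

lemma sq_add_sq_pos {α β : ℝ} (hαβ : 0 < α + β) : 0 < α ^ 2 + β ^ 2 := by
  nlinarith [sq_nonneg (α - β), mul_pos hαβ hαβ]

lemma Cinf.kone {f₁ f₂ : ℝ → ℝ} (α β : ℝ) (h₁ : Cinf f₁) (h₂ : Cinf f₂) :
    Cinf (kone α β f₁ f₂) :=
  (h₁.oddPart.const_mul α).add (h₂.oddPart.const_mul β)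

lemma Cinf.ktwo {f₁ f₂ : ℝ → ℝ} (h₁ : Cinf f₁) (h₂ : Cinf f₂) : Cinf (ktwo f₁ f₂) :=
  h₁.evenPart.sub h₂.evenPart

lemma Cinf.PskewOne {f₁ f₂ : ℝ → ℝ} (α β : ℝ) (h₁ : Cinf f₁) (h₂ : Cinf f₂) :
    Cinf (PskewOne α β f₁ f₂) :=
  (h₁.evenPart.add ((h₁.kone α β h₂).const_mul _)).sub ((h₁.ktwo h₂).const_mul _)

lemma Cinf.PskewTwo {f₁ f₂ : ℝ → ℝ} (α β : ℝ) (h₁ : Cinf f₁) (h₂ : Cinf f₂) :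
    Cinf (PskewTwo α β f₁ f₂) :=
  (h₂.evenPart.add ((h₁.kone α β h₂).const_mul _)).add ((h₁.ktwo h₂).const_mul _)

lemma memCskew_Pskew (α β : ℝ) {f₁ f₂ : ℝ → ℝ} (h₁ : Cinf f₁) (h₂ : Cinf f₂) :
    memCskew α β (PskewOne α β f₁ f₂) (PskewTwo α β f₁ f₂) := by
  refine ⟨h₁.PskewOne α β h₂, h₁.PskewTwo α β h₂, fun x => ?_, fun x => ?_⟩ <;>
  · simp only [PskewOne, PskewTwo, kone, ktwo, evenPart, oddPart, neg_neg]
    ring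

lemma memDweks_sub_Pskew {α β : ℝ} (hαβ : 0 < α + β) {f₁ f₂ : ℝ → ℝ} (h₁ : Cinf f₁)
    (h₂ : Cinf f₂) :
    memDweks α β (fun x => f₁ x - PskewOne α β f₁ f₂ x)
      (fun x => f₂ x - PskewTwo α β f₁ f₂ x) := by
  have hs := (sq_add_sq_pos hαβ).ne'
  refine ⟨h₁.sub (h₁.PskewOne α β h₂), h₂.sub (h₁.PskewTwo α β h₂), fun x => ?_, fun x => ?_⟩
  · simp only [PskewOne, PskewTwo, kone, ktwo, evenPart, oddPart, neg_neg]
    ring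
  · simp only [PskewOne, PskewTwo, kone, ktwo, evenPart, oddPart, neg_neg, gam_sq]
    field_simp
    ring

/-- `Q^skew_{α,β} = I - P^skew_{α,β}` is a projection of `𝒞` onto
`𝒟^weks_{α,β}`; `𝒞 = 𝒞^skew_{α,β} ⊕ 𝒟^weks_{α,β}`; and both subspaces are invariant
under the basic Cartesian product cosine family. -/
theorem statement19 (α β : ℝ) (hα : 0 ≤ α) (hβ : 0 ≤ β) (hαβ : 0 < α + β) :
    ((∀ f₁ f₂ : ℝ → ℝ, Cinf f₁ → Cinf f₂ →
        memDweks α β (fun x => f₁ x - PskewOne α β f₁ f₂ x)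
          (fun x => f₂ x - PskewTwo α β f₁ f₂ x)) ∧
      (∀ g₁ g₂ : ℝ → ℝ, memDweks α β g₁ g₂ →
        (fun x => g₁ x - PskewOne α β g₁ g₂ x) = g₁ ∧
        (fun x => g₂ x - PskewTwo α β g₁ g₂ x) = g₂)) ∧
    ((∀ g₁ g₂ : ℝ → ℝ, memCskew α β g₁ g₂ → memDweks α β g₁ g₂ →
        g₁ = (fun _ => 0) ∧ g₂ = (fun _ => 0)) ∧
      (∀ f₁ f₂ : ℝ → ℝ, Cinf f₁ → Cinf f₂ →
        ∃ h₁ h₂ d₁ d₂ : ℝ → ℝ, memCskew α β h₁ h₂ ∧ memDweks α β d₁ d₂ ∧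
          f₁ = (fun x => h₁ x + d₁ x) ∧ f₂ = (fun x => h₂ x + d₂ x))) ∧
    ((∀ t : ℝ, ∀ g₁ g₂ : ℝ → ℝ, memCskew α β g₁ g₂ →
        memCskew α β (cosF t g₁) (cosF t g₂)) ∧
      (∀ t : ℝ, ∀ g₁ g₂ : ℝ → ℝ, memDweks α β g₁ g₂ →
        memDweks α β (cosF t g₁) (cosF t g₂))) := by
  have hs := sq_add_sq_pos hαβ
  refine ⟨⟨fun f₁ f₂ h₁ h₂ => memDweks_sub_Pskew hαβ h₁ h₂, ?_⟩, ⟨?_, ?_⟩, ?_, ?_⟩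
  · rintro g₁ g₂ ⟨-, -, he, ho⟩
    -- The hypotheses say that `k₁` vanishes and that `k₂ = 2 g₁ᵉ = -2 g₂ᵉ`.
    have hk (x : ℝ) : kone α β g₁ g₂ x = 0 := by simp [kone, ho x]
    constructor <;> funext x <;> have := he x
    · simp only [PskewOne, hk, ktwo]
      linarith
    · simp only [PskewTwo, hk, ktwo]
      linarith
  · rintro g₁ g₂ ⟨-, -, he, ho⟩ ⟨-, -, he', ho'⟩
    have hodd₁ (x : ℝ) : oddPart g₁ x = 0 := by
      have : (α ^ 2 + β ^ 2) * oddPart g₁ x = 0 := by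
        linear_combination β * ho x + α * ho' x
      exact (mul_eq_zero.mp this).resolve_left hs.ne'
    have hodd₂ (x : ℝ) : oddPart g₂ x = 0 := by
      have : (α ^ 2 + β ^ 2) * oddPart g₂ x = 0 := by
        linear_combination β * ho' x - α * ho x
      exact (mul_eq_zero.mp this).resolve_left hs.ne'
    constructor <;> funext x
    · rw [← evenPart_add_oddPart g₁ x, hodd₁]
      linarith [he x, he' x]
    · rw [← evenPart_add_oddPart g₂ x, hodd₂]
      linarith [he x, he' x]
  · intro f₁ f₂ h₁ h₂
    exact ⟨_, _, _, _, memCskew_Pskew α β h₁ h₂, memDweks_sub_Pskew hαβ h₁ h₂,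
      by funext x; ring, by funext x; ring⟩
  · rintro t g₁ g₂ ⟨h₁, h₂, he, ho⟩
    refine ⟨h₁.cosF t, h₂.cosF t, fun x => ?_, fun x => ?_⟩
    · simp only [evenPart_cosF, cosF, he]
    · simp only [oddPart_cosF, cosF]
      linear_combination (ho (x + t) + ho (x - t)) / 2
  · rintro t g₁ g₂ ⟨h₁, h₂, he, ho⟩
    refine ⟨h₁.cosF t, h₂.cosF t, fun x => ?_, fun x => ?_⟩
    · simp only [evenPart_cosF, cosF]
      linear_combination (he (x + t) + he (x - t)) / 2
    · simp only [oddPart_cosF, cosF]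
      linear_combination (ho (x + t) + ho (x - t)) / 2
end
end
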